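/- arXiv:0801.4786 — 2 statements merged into one kernel-verified Lean document; each statement's English description precedes it below -/
import Mathlib

section
/- Let n ≥ 2 and let p be a prime. There exists a group homomorphism φ from the braid group B_n to GL(n,F) ⋊ S_n such that φ(σ_i) = g_i for every i = 1,…,n−1 (Lemma 1 of the paper: the elements g_i satisfy the braid relations and hence determine a representation of B_n). -/
/-- `F` : the field of fractions of the multivariate polynomial ring over `𝔽_p = ZMod p`
in variables `t_1, …, t_n` (0-indexed as `X 0, …, X (n-1)`). -/
noncomputable abbrev BurauField (n p : ℕ) : Type :=
  FractionRing (MvPolynomial (Fin n) (ZMod p))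

/-- The variable `t_i` (1-based index `i`, so `tvar n p (i-1)` is `t_i`) viewed inside
the fraction field. -/
noncomputable def tvar (n p : ℕ) (k : ℕ) : BurauField n p :=
  if h : k < n then
    algebraMap (MvPolynomial (Fin n) (ZMod p)) (BurauField n p) (MvPolynomial.X ⟨k, h⟩)
  else 0

/-- The colored Burau matrix `x_i(t)` (1-based index `i` with `1 ≤ i ≤ n-1`):
the identity matrix except for the `i`-th row, which has entries `t_i, -t_i, 1`
in columns `i-1, i, i+1` (with `-t_i` on the diagonal); for `i = 1` the first row
is `(-t_1, 1, 0, …, 0)`. -/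
noncomputable def colBurau (n p : ℕ) (i : ℕ) : Matrix (Fin n) (Fin n) (BurauField n p) :=
  Matrix.of fun r c =>
    if (r : ℕ) + 1 = i then
      if (c : ℕ) + 1 = i then -(tvar n p (i - 1))
      else if (c : ℕ) = i then 1
      else if (c : ℕ) + 2 = i then tvar n p (i - 1)
      else 0
    else if r = c then 1 else 0

/-- The action of a permutation `s ∈ S_n` on the fraction field, permuting the
variables `t_1, …, t_n`. -/
noncomputable def permF (n p : ℕ) (s : Equiv.Perm (Fin n)) : BurauField n p ≃+* BurauField n p :=
  IsFractionRing.ringEquivOfRingEquiv (MvPolynomial.renameEquiv (ZMod p) s).toRingEquiv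


/-- The braid relations on `n` strands: generators are indexed by `Fin (n-1)`
(index `i : Fin (n-1)` corresponds to the Artin generator `σ_{i+1}`), with relations
`σ_i σ_j σ_i = σ_j σ_i σ_j` for `|i-j| = 1` and `σ_i σ_j = σ_j σ_i` for `|i-j| > 1`. -/
def braidRels (n : ℕ) : Set (FreeGroup (Fin (n - 1))) :=
  {r | ∃ i j : Fin (n - 1),
    (((i : ℤ) - (j : ℤ)).natAbs = 1 ∧
      r = FreeGroup.of i * FreeGroup.of j * FreeGroup.of i *
          (FreeGroup.of j * FreeGroup.of i * FreeGroup.of j)⁻¹) ∨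
    (1 < ((i : ℤ) - (j : ℤ)).natAbs ∧
      r = FreeGroup.of i * FreeGroup.of j * (FreeGroup.of j * FreeGroup.of i)⁻¹)}

/-- The braid group `B_n` on `n` strands, presented by the Artin generators and the
braid relations. -/
abbrev BraidGroup (n : ℕ) : Type := PresentedGroup (braidRels n)

/-- The Artin generator `σ_{i+1}` of the braid group `B_n` (so `braidGen n ⟨i-1,_⟩`
is the paper's `σ_i`, `1 ≤ i ≤ n-1`). -/
def braidGen (n : ℕ) (i : Fin (n - 1)) : BraidGroup n := PresentedGroup.of i

/-- Colored Burau matrix with arbitrary parameter. -/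
def genBurau {F : Type} [Field F] (n i : ℕ) (t : F) : Matrix (Fin n) (Fin n) F :=
  Matrix.of fun r c =>
    if (r : ℕ) + 1 = i then
      if (c : ℕ) + 1 = i then -t
      else if (c : ℕ) = i then 1
      else if (c : ℕ) + 2 = i then t
      else 0
    else if r = c then 1 else 0

/-- Extension of a vector by zero, with 1-based indexing. -/
def extVec {F : Type} [Field F] {n : ℕ} (v : Fin n → F) (k : ℕ) : F :=
  ∑ c : Fin n, if (c : ℕ) + 1 = k then v c else 0

theorem extVec_succ {F : Type} [Field F] {n : ℕ} (v : Fin n → F) (r : Fin n) :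
    extVec v ((r : ℕ) + 1) = v r := by
  unfold extVec
  rw [Finset.sum_eq_single r]
  · simp
  · intro b _ hb
    rw [if_neg]
    intro h
    exact hb (Fin.ext (by omega))
  · simp

theorem extVec_out {F : Type} [Field F] {n : ℕ} (v : Fin n → F) (k : ℕ)
    (hk : ∀ r : Fin n, (r : ℕ) + 1 ≠ k) : extVec v k = 0 := by
  unfold extVec
  exact Finset.sum_eq_zero fun c _ => if_neg (hk c)

theorem extVec_inj {F : Type} [Field F] {n : ℕ} (v w : Fin n → F)
    (h : ∀ k, extVec v k = extVec w k) : v = w := by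
  funext r
  rw [← extVec_succ v r, ← extVec_succ w r, h]

theorem extVec_genBurau {F : Type} [Field F] {n : ℕ} (i : ℕ) (h1 : 1 ≤ i) (h2 : i ≤ n)
    (t : F) (v : Fin n → F) (k : ℕ) :
    extVec ((genBurau n i t).mulVec v) k =
      if k = i then t * extVec v (i - 1) - t * extVec v i + extVec v (i + 1)
      else extVec v k := by
  by_cases hk : ∃ r : Fin n, (r : ℕ) + 1 = k
  · obtain ⟨r, rfl⟩ := hk
    rw [extVec_succ]
    by_cases hr : (r : ℕ) + 1 = i
    · rw [if_pos hr]
      unfold extVec Matrix.mulVec dotProduct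
      rw [Finset.mul_sum, Finset.mul_sum, ← Finset.sum_sub_distrib, ← Finset.sum_add_distrib]
      refine Finset.sum_congr rfl fun c _ => ?_
      simp only [genBurau, Matrix.of_apply, if_pos hr]
      split_ifs <;> first | omega | ring
    · rw [if_neg hr, extVec_succ]
      unfold Matrix.mulVec dotProduct
      simp [genBurau, hr]
  · have hk' : ∀ r : Fin n, (r : ℕ) + 1 ≠ k := fun r h => hk ⟨r, h⟩
    rw [extVec_out _ _ hk', extVec_out _ _ hk', if_neg]
    rintro rfl
    exact hk ⟨⟨k - 1, by omega⟩, by simp; omega⟩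

theorem matrix_ext_extVec {F : Type} [Field F] {n : ℕ} (A B : Matrix (Fin n) (Fin n) F)
    (h : ∀ v k, extVec (A.mulVec v) k = extVec (B.mulVec v) k) : A = B :=
  Matrix.ext_of_mulVec_single fun _ => extVec_inj _ _ (h _)

theorem genBurau_braid {F : Type} [Field F] {n : ℕ} (i : ℕ) (h1 : 1 ≤ i) (h2 : i + 1 ≤ n)
    (a b : F) :
    genBurau n i a * genBurau n (i + 1) a * genBurau n i b =
      genBurau n (i + 1) b * genBurau n i a * genBurau n (i + 1) a := by
  refine matrix_ext_extVec _ _ fun v k => ?_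
  simp only [← Matrix.mulVec_mulVec, extVec_genBurau i h1 (show i ≤ n by omega),
    extVec_genBurau (i + 1) (show 1 ≤ i + 1 by omega) h2]
  have e1 : i - 1 ≠ i := by omega
  have e2 : i - 1 ≠ i + 1 := by omega
  have e3 : i + 1 + 1 ≠ i := by omega
  by_cases ha : k = i
  · subst ha
    simp [e1, e2, e3]; try ring
  · by_cases hb : k = i + 1
    · subst hb
      simp [e1, e2, e3]; try ring
    · simp [ha, hb]

theorem genBurau_comm {F : Type} [Field F] {n : ℕ} (i j : ℕ) (h1 : 1 ≤ i) (h2 : i ≤ n)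
    (h3 : i + 1 < j) (h4 : j ≤ n) (a b : F) :
    genBurau n i a * genBurau n j b = genBurau n j b * genBurau n i a := by
  refine matrix_ext_extVec _ _ fun v k => ?_
  simp only [← Matrix.mulVec_mulVec, extVec_genBurau i h1 h2, extVec_genBurau j (show 1 ≤ j by omega) h4]
  split_ifs <;> first | omega | rfl

theorem colBurau_eq (n p i : ℕ) [Fact p.Prime] :
    colBurau n p i = genBurau n i (tvar n p (i - 1)) := rfl

theorem genBurau_map {F : Type} [Field F] (n i : ℕ) (t : F) (f : F ≃+* F) :
    (genBurau n i t).map f = genBurau n i (f t) := by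
  ext r c
  simp only [genBurau, Matrix.map_apply, Matrix.of_apply]
  split_ifs <;> simp

theorem swap_braid_aux {α : Type} [DecidableEq α] (a b c : α) (hA : a ≠ b) (hB : a ≠ c)
    (hC : b ≠ c) : Equiv.swap a b * Equiv.swap b c * Equiv.swap a b =
      Equiv.swap b c * Equiv.swap a b * Equiv.swap b c := by
  ext1 y
  simp only [Equiv.Perm.mul_apply, Equiv.swap_apply_def]
  grind

theorem swap_comm_aux {α : Type} [DecidableEq α] (a b c d : α) (hA : a ≠ c) (hB : a ≠ d)
    (hC : b ≠ c) (hD : b ≠ d) : Equiv.swap a b * Equiv.swap c d =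
      Equiv.swap c d * Equiv.swap a b := by
  ext1 y
  simp only [Equiv.Perm.mul_apply, Equiv.swap_apply_def]
  grind

theorem permF_tvar (n p : ℕ) (s : Equiv.Perm (Fin n)) (k : Fin n) :
    permF n p s (tvar n p k) = tvar n p (s k) := by
  simp [permF, tvar]

/-- (Lemma 1) The elements `g_i = (x_i(t), s_i)`, `i = 1, …, n-1`, satisfy the braid
relations and hence determine a representation of the braid group: there exists a group
homomorphism `φb : B_n → GL(n,F) ⋊ S_n` with `φb(σ_i) = g_i` for every `i = 1, …, n-1`.
Here `φ` is the action of `S_n` on `GL(n,F)` induced by permuting the variables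
(characterized entrywise by `hφ`), `x i ∈ GL(n,F)` is the colored Burau matrix
(characterized by `hx`), and `s_i` is the transposition `(i, i+1)`
(0-indexed: `Equiv.swap ⟨i-1,_⟩ ⟨i,_⟩`). -/
theorem exists_colored_burau_representation (n p : ℕ) (hn : 2 ≤ n) (hp : p.Prime)
    (φ : Equiv.Perm (Fin n) →* MulAut (GL (Fin n) (BurauField n p)))
    (hφ : ∀ (s : Equiv.Perm (Fin n)) (m : GL (Fin n) (BurauField n p)),
      ((φ s m : Matrix (Fin n) (Fin n) (BurauField n p)) =
        (m : Matrix (Fin n) (Fin n) (BurauField n p)).map (permF n p s)))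
    (x : ℕ → GL (Fin n) (BurauField n p))
    (hx : ∀ i, 1 ≤ i → i ≤ n - 1 →
      ((x i : Matrix (Fin n) (Fin n) (BurauField n p)) = colBurau n p i)) :
    ∃ φb : BraidGroup n →* (GL (Fin n) (BurauField n p) ⋊[φ] Equiv.Perm (Fin n)),
      ∀ (i : ℕ) (h1 : 1 ≤ i) (h2 : i ≤ n - 1),
        φb (braidGen n ⟨i - 1, by omega⟩) =
          ⟨x i, Equiv.swap ⟨i - 1, by omega⟩ ⟨i, by omega⟩⟩ := by
  have : Fact p.Prime := ⟨hp⟩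
  let g : Fin (n - 1) → (GL (Fin n) (BurauField n p) ⋊[φ] Equiv.Perm (Fin n)) := fun i =>
    ⟨x (i + 1), Equiv.swap ⟨i, by omega⟩ ⟨i + 1, by omega⟩⟩
  have hmat : ∀ i : Fin (n - 1), ((x (i + 1) : GL (Fin n) (BurauField n p)) :
      Matrix (Fin n) (Fin n) (BurauField n p)) = genBurau n (i + 1) (tvar n p i) := by
    intro i
    rw [hx _ (by omega) (by omega), colBurau_eq]
    rfl
  have hact : ∀ (s : Equiv.Perm (Fin n)) (i : Fin (n - 1)),
      ((φ s (x (i + 1)) : GL (Fin n) (BurauField n p)) :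
      Matrix (Fin n) (Fin n) (BurauField n p)) =
        genBurau n (i + 1) (tvar n p (s ⟨i, by omega⟩)) := by
    intro s i
    rw [hφ, hmat, genBurau_map, ← permF_tvar]
  have hbraid : ∀ i j : Fin (n - 1), (j : ℕ) = i + 1 → g i * g j * g i = g j * g i * g j := by
    intro i j hij
    have hj : (⟨j, by omega⟩ : Fin n) = ⟨i + 1, by omega⟩ := Fin.ext hij
    refine SemidirectProduct.ext ?_ ?_
    · apply Units.ext
      simp only [g, SemidirectProduct.mul_left, SemidirectProduct.mul_right, Units.val_mul,
        hact, hmat]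
      have e1 : (Equiv.swap (⟨i, by omega⟩ : Fin n) ⟨i + 1, by omega⟩) ⟨j, by omega⟩ =
          ⟨i, by omega⟩ := by
        rw [hj]; exact Equiv.swap_apply_right _ _
      have e2 : (Equiv.swap (⟨j, by omega⟩ : Fin n) ⟨j + 1, by omega⟩) ⟨i, by omega⟩ =
          ⟨i, by omega⟩ := by
        apply Equiv.swap_apply_of_ne_of_ne <;> simp [Fin.ext_iff] <;> omega
      have e3 : (Equiv.swap (⟨i, by omega⟩ : Fin n) ⟨i + 1, by omega⟩) ⟨i, by omega⟩ =
          ⟨j, by omega⟩ := by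
        rw [hj]; exact Equiv.swap_apply_left _ _
      simp only [Equiv.Perm.mul_apply, e1, e2, e3]
      rw [hij]
      exact genBurau_braid _ (by omega) (by omega) _ _
    · simp only [g, SemidirectProduct.mul_right]
      rw [← hj]
      apply swap_braid_aux <;> simp [Fin.ext_iff] <;> omega
  have hcomm : ∀ i j : Fin (n - 1), (i : ℕ) + 1 < j → g i * g j = g j * g i := by
    intro i j hij
    refine SemidirectProduct.ext ?_ ?_
    · apply Units.ext
      simp only [g, SemidirectProduct.mul_left, Units.val_mul, hact, hmat]
      have e1 : (Equiv.swap (⟨i, by omega⟩ : Fin n) ⟨i + 1, by omega⟩) ⟨j, by omega⟩ =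
          ⟨j, by omega⟩ := by
        apply Equiv.swap_apply_of_ne_of_ne <;> simp [Fin.ext_iff] <;> omega
      have e2 : (Equiv.swap (⟨j, by omega⟩ : Fin n) ⟨j + 1, by omega⟩) ⟨i, by omega⟩ =
          ⟨i, by omega⟩ := by
        apply Equiv.swap_apply_of_ne_of_ne <;> simp [Fin.ext_iff] <;> omega
      simp only [e1, e2]
      exact genBurau_comm _ _ (by omega) (by omega) (by omega) (by omega) _ _
    · simp only [g, SemidirectProduct.mul_right]
      apply swap_comm_aux <;> simp [Fin.ext_iff] <;> omega
  have hrel : ∀ r ∈ braidRels n, FreeGroup.lift g r = 1 := by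
    rintro r ⟨i, j, ⟨hd, rfl⟩ | ⟨hd, rfl⟩⟩
    · simp only [map_mul, map_inv, FreeGroup.lift_apply_of]
      rw [mul_inv_eq_one]
      have : (j : ℕ) = i + 1 ∨ (i : ℕ) = j + 1 := by omega
      rcases this with h | h
      · exact hbraid i j h
      · exact (hbraid j i h).symm
    · simp only [map_mul, map_inv, FreeGroup.lift_apply_of]
      rw [mul_inv_eq_one]
      have : (i : ℕ) + 1 < j ∨ (j : ℕ) + 1 < i := by omega
      rcases this with h | h
      · exact hcomm i j h
      · exact (hcomm j i h).symm
  refine ⟨PresentedGroup.toGroup hrel, fun i h1 h2 => ?_⟩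
  obtain ⟨k, rfl⟩ : ∃ k, i = k + 1 := ⟨i - 1, by omega⟩
  exact PresentedGroup.toGroup.of hrel
end

section
/- Let n ≥ 2, let Δ ∈ B_n be the half twist, and let ℓ be the geodesic length function on B_n. Let u ∈ B_n satisfy 2·ℓ(u) < n·(n−1). Then the sequence p ↦ ℓ(Δ^{2p}·u), indexed by the natural numbers p = 0, 1, 2, …, is strictly increasing. -/
/-- The half twist `Δ = (σ_1⋯σ_{n-1})·(σ_1⋯σ_{n-2})·⋯·(σ_1) ∈ B_n`. -/
def halfTwist (n : ℕ) : BraidGroup n :=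
  (List.ofFn fun r : Fin (n - 1) =>
    (List.ofFn fun c : Fin (n - 1 - (r : ℕ)) =>
      braidGen n ⟨(c : ℕ), by have := c.isLt; omega⟩).prod).prod

/-- The geodesic length `ℓ(g)` of a braid `g ∈ B_n`: the length of a shortest word over
the alphabet `{σ_1^{±1}, …, σ_{n-1}^{±1}}` representing `g`. -/
noncomputable def geodesicLength (n : ℕ) (g : BraidGroup n) : ℕ :=
  sInf {k | ∃ L : List (BraidGroup n), L.length = k ∧
    (∀ a ∈ L, ∃ i : Fin (n - 1), a = braidGen n i ∨ a = (braidGen n i)⁻¹) ∧ L.prod = g}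

/-- `g` is represented by a word of length `k`. -/
def BraidHasWord (n : ℕ) (g : BraidGroup n) (k : ℕ) : Prop :=
  ∃ L : List (BraidGroup n), L.length = k ∧
    (∀ a ∈ L, ∃ i : Fin (n - 1), a = braidGen n i ∨ a = (braidGen n i)⁻¹) ∧ L.prod = g

theorem BraidHasWord.one (n : ℕ) : BraidHasWord n 1 0 := ⟨[], by simp⟩

theorem BraidHasWord.mul {n : ℕ} {g h : BraidGroup n} {k l : ℕ}
    (hg : BraidHasWord n g k) (hh : BraidHasWord n h l) : BraidHasWord n (g * h) (k + l) := by
  obtain ⟨L, hL, hL', rfl⟩ := hg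
  obtain ⟨M, hM, hM', rfl⟩ := hh
  refine ⟨L ++ M, by simp [hL, hM], ?_, by simp⟩
  intro a ha
  rcases List.mem_append.1 ha with h | h
  · exact hL' a h
  · exact hM' a h

theorem BraidHasWord.gen (n : ℕ) (i : Fin (n - 1)) : BraidHasWord n (braidGen n i) 1 :=
  ⟨[braidGen n i], rfl, fun a ha => ⟨i, Or.inl (List.mem_singleton.1 ha)⟩, by simp⟩

theorem BraidHasWord.inv {n : ℕ} {g : BraidGroup n} {k : ℕ}
    (hg : BraidHasWord n g k) : BraidHasWord n g⁻¹ k := by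
  obtain ⟨L, hL, hL', rfl⟩ := hg
  refine ⟨(L.map (·⁻¹)).reverse, by simp [hL], ?_, by rw [List.prod_inv_reverse]⟩
  intro a ha
  simp only [List.mem_reverse, List.mem_map] at ha
  obtain ⟨b, hb, rfl⟩ := ha
  obtain ⟨i, h | h⟩ := hL' b hb
  · exact ⟨i, Or.inr (by rw [h])⟩
  · exact ⟨i, Or.inl (by rw [h, inv_inv])⟩

theorem BraidHasWord.exists_word (n : ℕ) (g : BraidGroup n) : ∃ k, BraidHasWord n g k := by
  have hg : g ∈ Subgroup.closure (Set.range (PresentedGroup.of : Fin (n - 1) → BraidGroup n)) := by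
    rw [PresentedGroup.closure_range_of]; trivial
  induction hg using Subgroup.closure_induction with
  | mem x hx =>
    obtain ⟨i, rfl⟩ := hx
    exact ⟨1, BraidHasWord.gen n i⟩
  | one => exact ⟨0, BraidHasWord.one n⟩
  | mul x y _ _ hx hy =>
    obtain ⟨k, hk⟩ := hx
    obtain ⟨l, hl⟩ := hy
    exact ⟨k + l, hk.mul hl⟩
  | inv x _ hx =>
    obtain ⟨k, hk⟩ := hx
    exact ⟨k, hk.inv⟩

theorem BraidHasWord.geodesic (n : ℕ) (g : BraidGroup n) :
    BraidHasWord n g (geodesicLength n g) :=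
  Nat.sInf_mem (BraidHasWord.exists_word n g)

theorem BraidHasWord.geodesic_le {n : ℕ} {g : BraidGroup n} {k : ℕ}
    (h : BraidHasWord n g k) : geodesicLength n g ≤ k := Nat.sInf_le h

/-- The exponent sum homomorphism. -/
def braidExp (n : ℕ) : BraidGroup n →* Multiplicative ℤ :=
  PresentedGroup.toGroup (f := fun _ => Multiplicative.ofAdd 1) (by
    rintro r ⟨i, j, ⟨_, rfl⟩ | ⟨_, rfl⟩⟩ <;> simp)

theorem braidExp_gen (n : ℕ) (i : Fin (n - 1)) :
    braidExp n (braidGen n i) = Multiplicative.ofAdd 1 :=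
  PresentedGroup.toGroup.of _

theorem braidExp_abs_le {n : ℕ} {g : BraidGroup n} {k : ℕ} (h : BraidHasWord n g k) :
    |(braidExp n g).toAdd| ≤ k := by
  obtain ⟨L, rfl, hL, rfl⟩ := h
  induction L with
  | nil => simp
  | cons a L ih =>
    have h1 := ih (fun b hb => hL b (List.mem_cons_of_mem _ hb))
    have h2 : |(braidExp n a).toAdd| ≤ 1 := by
      obtain ⟨i, rfl | rfl⟩ := hL a List.mem_cons_self
      · simp [braidExp_gen]
      · simp [braidExp_gen]
    rw [List.prod_cons, map_mul, toAdd_mul, List.length_cons]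
    push_cast
    exact (abs_add_le _ _).trans (by linarith)

/-- `g` has a word of length `k` and exponent sum `k`. -/
def BraidPos (n : ℕ) (g : BraidGroup n) (k : ℕ) : Prop :=
  BraidHasWord n g k ∧ (braidExp n g).toAdd = k

theorem BraidPos.one (n : ℕ) : BraidPos n 1 0 := ⟨BraidHasWord.one n, by simp⟩

theorem BraidPos.mul {n : ℕ} {g h : BraidGroup n} {k l : ℕ}
    (hg : BraidPos n g k) (hh : BraidPos n h l) : BraidPos n (g * h) (k + l) :=
  ⟨hg.1.mul hh.1, by rw [map_mul, toAdd_mul, hg.2, hh.2]; push_cast; rfl⟩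

theorem BraidPos.pow {n : ℕ} {g : BraidGroup n} {k : ℕ}
    (hg : BraidPos n g k) (m : ℕ) : BraidPos n (g ^ m) (m * k) := by
  induction m with
  | zero => simpa using BraidPos.one n
  | succ m ih => rw [pow_succ, Nat.succ_mul]; exact ih.mul hg

theorem BraidPos.ofFn {n : ℕ} : ∀ {m : ℕ} (f : Fin m → BraidGroup n) (k : Fin m → ℕ),
    (∀ i, BraidPos n (f i) (k i)) → BraidPos n (List.ofFn f).prod (∑ i, k i)
  | 0, f, k, _ => by simpa using BraidPos.one n
  | m + 1, f, k, h => by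
    rw [List.ofFn_succ, List.prod_cons, Fin.sum_univ_succ]
    exact (h 0).mul (BraidPos.ofFn _ _ fun i => h i.succ)

theorem braid_two_mul_sum (m : ℕ) : 2 * (∑ r : Fin m, (m - (r : ℕ))) = (m + 1) * m := by
  induction m with
  | zero => simp
  | succ m ih =>
    rw [Fin.sum_univ_succ]
    simp only [Fin.val_zero, Fin.val_succ, Nat.add_sub_add_right]
    rw [mul_add, ih]
    simp only [Nat.sub_zero]
    ring

theorem halfTwist_pos (n : ℕ) :
    BraidPos n (halfTwist n) (∑ r : Fin (n - 1), (n - 1 - (r : ℕ))) := by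
  refine BraidPos.ofFn _ _ fun r => ?_
  have := BraidPos.ofFn (n := n) (fun c : Fin (n - 1 - (r : ℕ)) =>
      braidGen n ⟨(c : ℕ), by have := c.isLt; omega⟩) (fun _ => 1)
      (fun c => ⟨BraidHasWord.gen n _, by simp [braidExp_gen]⟩)
  simpa using this

/-- If `u ∈ B_n` satisfies `2·ℓ(u) < n·(n-1)`, then the sequence
`p ↦ ℓ(Δ^{2p}·u)` (for natural numbers `p`) is strictly increasing. -/
theorem strictMono_geodesicLength_halfTwist_sq_pow_mul (n : ℕ) (hn : 2 ≤ n)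
    (u : BraidGroup n) (hu : 2 * geodesicLength n u < n * (n - 1)) :
    StrictMono fun p : ℕ => geodesicLength n (halfTwist n ^ (2 * p) * u) := by
  obtain ⟨N, hN, hΔ⟩ : ∃ N, 2 * N = n * (n - 1) ∧ BraidPos n (halfTwist n) N := by
    refine ⟨_, ?_, halfTwist_pos n⟩
    rw [braid_two_mul_sum, Nat.sub_add_cancel (by omega)]
  refine strictMono_nat_of_lt_succ fun p => ?_
  have hW := BraidHasWord.geodesic n u
  have hup := ((hΔ.pow (2 * p)).1.mul hW).geodesic_le
  have hlow := braidExp_abs_le (BraidHasWord.geodesic n (halfTwist n ^ (2 * (p + 1)) * u))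
  have hu' := neg_le_of_abs_le (braidExp_abs_le hW)
  rw [map_mul, toAdd_mul, (hΔ.pow (2 * (p + 1))).2] at hlow
  have hlow' := (le_abs_self _).trans hlow
  have hlt : (geodesicLength n u : ℤ) < N := by
    have : geodesicLength n u < N := by omega
    exact_mod_cast this
  push_cast at hlow'
  zify at hup ⊢
  linarith
end
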